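/- Let a ∈ [0,1] and b₀ = (3+a)/(4(2+a)). There exists a constant C > 0, depending only on a and the fixed dyadic cutoffs, such that for every Schwartz function f on ℝ² one has ‖f‖_{L⁴(ℝ²)} ≤ C ‖f‖_{X^{b₀}_0}. -/

import Mathlib

/-!
The estimate is a Strichartz-type bilinear bound, proved on the Fourier side.

Write `f = 𝓕 Φ` with `Φ` the inverse Fourier transform of `f`, which is `f̂` up to a dilation by `2π`
(`FT2_eq`, `energy_eq`), and decompose `Φ = ∑ χ_j Φ` by the size `2 ^ j` of the modulation
`λ - ω(ξ)`. By the triangle inequality in `L⁴` and Fatou's lemma it suffices to bound each piece by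
`C 2 ^ (j b₀) ‖χ_j Φ‖₂` with `b₀ = (3 + a) / (4 (2 + a))` (`eLpNorm_fourier_piece`).

For a single piece `G`, supported in a set `A`, Plancherel and Cauchy–Schwarz give
`‖𝓕 G‖₄⁴ = ‖𝓕 (G ⋆ G)‖₂² ≤ sup_q |{r ∈ A, q - r ∈ A}| · ‖G‖₂⁴` (`lintegral_fourier_pow_four_le`).
Here `A` is a strip of width `L ~ 2 ^ j` around the curve `λ = ω(ξ)`, restricted to one sign of `ξ`.
If `r` and `q - r` both lie in `A`, then `λ` is confined to an interval of length `2L`, and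
`ω(ξ) + ω(q₁ - ξ)` is within `2L` of `q₂`. Clarkson's inequality for the power `p = 2 + a` shows that
this function of `ξ` increases by at least a multiple of `(t - s) ^ p` between points `s ≤ t` of
`[q₁/2, q₁]` (`resonance_gap`), so `ξ` is confined to a set of measure `O(L ^ (1/p))`. The measure is
thus `O(L ^ (1 + 1/p))` (`volume_strip_inter_le`), and its fourth root has exponent `b₀`.

The dyadic sum defining the norm converges for Schwartz functions (`summable_energy`).
-/

open MeasureTheory Complex

noncomputable section

/-- The dispersive symbol `ω(ξ) = ξ |ξ|^(1+a)`. -/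
def disp (a ξ : ℝ) : ℝ := ξ * |ξ| ^ (1 + a)

/-- Fourier transform on `ℝ`, convention `f̂(ξ) = ∫ e^{ixξ} f(x) dx`. -/
def FT1 (f : ℝ → ℂ) (ξ : ℝ) : ℂ :=
  ∫ x : ℝ, Complex.exp (Complex.I * ((x * ξ : ℝ) : ℂ)) * f x

/-- Spacetime Fourier transform, convention `f̂(ξ,λ) = ∫ e^{i(xξ+tλ)} f(x,t) dx dt`,
for `f : ℝ × ℝ → ℂ` with first coordinate `x` (space) and second `t` (time). -/
def FT2 (f : ℝ × ℝ → ℂ) (ξ lam : ℝ) : ℂ :=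
  ∫ p : ℝ × ℝ, Complex.exp (Complex.I * ((p.1 * ξ + p.2 * lam : ℝ) : ℂ)) * f p

/-- The dyadic cutoffs `χ_j`: `χ_0 = χ₀` and `χ_j(z) = χ(2^{-j} z)` for `j ≥ 1`. -/
def chiJ (χ₀ χ : ℝ → ℝ) (j : ℕ) (z : ℝ) : ℝ :=
  if j = 0 then χ₀ z else χ ((2 : ℝ) ^ (-(j : ℝ)) * z)

/-- Hypotheses on the fixed dyadic cutoffs. -/
structure DyadicCutoffs (χ₀ χ : ℝ → ℝ) : Prop where
  smooth0 : ContDiff ℝ (⊤ : ℕ∞) χ₀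
  even0 : ∀ z, χ₀ (-z) = χ₀ z
  mem0 : ∀ z, χ₀ z ∈ Set.Icc (0 : ℝ) 1
  supp0 : ∀ z, 2 < |z| → χ₀ z = 0
  one0 : ∀ z, |z| ≤ 1 → χ₀ z = 1
  smooth1 : ContDiff ℝ (⊤ : ℕ∞) χ
  even1 : ∀ z, χ (-z) = χ z
  mem1 : ∀ z, χ z ∈ Set.Icc (0 : ℝ) 1
  supp1 : ∀ z, χ z ≠ 0 → 1 / 2 < |z| ∧ |z| < 2
  partition : ∀ z, ∑' j : ℕ, chiJ χ₀ χ j z = 1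

/-- A smooth time cutoff supported in `[-1,1]`. -/
structure TimeCutoff (ψ : ℝ → ℝ) : Prop where
  smooth : ContDiff ℝ (⊤ : ℕ∞) ψ
  supp : ∀ t, ψ t ≠ 0 → |t| ≤ 1

/-- The norm `‖f‖_{X^b_s}`. -/
def Xnorm (a : ℝ) (χ₀ χ : ℝ → ℝ) (b s : ℝ) (f : ℝ × ℝ → ℂ) : ℝ :=
  ∑' j : ℕ, (2 : ℝ) ^ ((j : ℝ) * b) *
    (∫ p : ℝ × ℝ, chiJ χ₀ χ j (p.2 - disp a p.1) * (1 + |p.1|) ^ (2 * s) *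
      ‖FT2 f p.1 p.2‖ ^ 2) ^ ((1 : ℝ) / 2)

/-- The norm `‖f‖_{Y^b_{s₀,s₁}} = ‖x·f‖_{X^b_{s₀}} + ‖t·f‖_{X^b_{s₁}}`. -/
def Ynorm (a : ℝ) (χ₀ χ : ℝ → ℝ) (b s₀ s₁ : ℝ) (f : ℝ × ℝ → ℂ) : ℝ :=
  Xnorm a χ₀ χ b s₀ (fun p => (p.1 : ℂ) * f p) +
    Xnorm a χ₀ χ b s₁ (fun p => (p.2 : ℂ) * f p)

/-- The norm `‖f‖_{Z^b_s} = ‖f‖_{X^b_s} + ‖f‖_{Y^b_{s-2s*,s}}`, where `s* = 1/2 + a/2`. -/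
def Znorm (a : ℝ) (χ₀ χ : ℝ → ℝ) (b s : ℝ) (f : ℝ × ℝ → ℂ) : ℝ :=
  Xnorm a χ₀ χ b s f + Ynorm a χ₀ χ b (s - 2 * (1 / 2 + a / 2)) s f

/-- The norm `‖f‖_{X̃^b_s}`. -/
def XtildeNorm (a b s : ℝ) (f : ℝ × ℝ → ℂ) : ℝ :=
  (∫ p : ℝ × ℝ, (1 + |p.2 - disp a p.1|) ^ (2 * b) * (1 + |p.1|) ^ (2 * s) *
    ‖FT2 f p.1 p.2‖ ^ 2) ^ ((1 : ℝ) / 2)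

/-- The Sobolev norm `‖g‖_{H^s} = (∫ (1+|ξ|)^{2s} |ĝ(ξ)|² dξ)^{1/2}`. -/
def Hnorm (s : ℝ) (g : ℝ → ℂ) : ℝ :=
  (∫ ξ : ℝ, (1 + |ξ|) ^ (2 * s) * ‖FT1 g ξ‖ ^ 2) ^ ((1 : ℝ) / 2)

/-- The weighted norm `‖g‖_{F^s} = ‖g‖_{H^s} + ‖x·g‖_{H^{s-2s*}}` (here `sstar = s*`). -/
def Fnorm (sstar s : ℝ) (g : ℝ → ℂ) : ℝ :=
  Hnorm s g + Hnorm (s - 2 * sstar) (fun x => (x : ℂ) * g x)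

/-- The `L^p` norm `(∫ ‖f‖^p)^{1/p}`. -/
def Lpnorm {α : Type*} [MeasureSpace α] {E : Type*} [NormedAddCommGroup E]
    (p : ℝ) (f : α → E) : ℝ :=
  (∫ x, ‖f x‖ ^ p) ^ (1 / p)

/-- The linear propagator `W(t)`, defined via Fourier inversion so that its Fourier
transform in `x` is `e^{itω(ξ)} û₀(ξ)`. -/
def Wgrp (a : ℝ) (u₀ : ℝ → ℂ) (t x : ℝ) : ℂ :=
  ((1 / (2 * Real.pi) : ℝ) : ℂ) *
    ∫ ξ : ℝ, Complex.exp (-(Complex.I * ((x * ξ : ℝ) : ℂ))) *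
      (Complex.exp (Complex.I * ((t * disp a ξ : ℝ) : ℂ)) * FT1 u₀ ξ)

/-- The Fourier multiplier `D^σ` with symbol `|ξ|^σ`, via Fourier inversion. -/
def Dop (σ : ℝ) (g : ℝ → ℂ) (x : ℝ) : ℂ :=
  ((1 / (2 * Real.pi) : ℝ) : ℂ) *
    ∫ ξ : ℝ, Complex.exp (-(Complex.I * ((x * ξ : ℝ) : ℂ))) *
      (((|ξ| ^ σ : ℝ) : ℂ) * FT1 g ξ)

open scoped FourierTransform SchwartzMap ENNReal Convolution ContDiff

/-! ### The bilinear Fourier estimate -/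

/-- The Plancherel inequality for the Fourier integral of `H ∈ L¹ ∩ L²`: tested against compactly
supported smooth functions, the integral agrees with the isometric extension of `𝓕` to `L²`. -/
theorem eLpNorm_fourier_two_le {E : Type*} [NormedAddCommGroup E] [InnerProductSpace ℝ E]
    [FiniteDimensional ℝ E] [MeasurableSpace E] [BorelSpace E] {H : E → ℂ}
    (h1 : Integrable H) (h2 : MemLp H 2) :
    eLpNorm (𝓕 H) 2 ≤ eLpNorm H 2 := by
  have hcont : Continuous (𝓕 H) :=
    VectorFourier.fourierIntegral_continuous Real.continuous_fourierChar continuous_inner h1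
  have hae : ∀ᵐ x, 𝓕 H x = (𝓕 (h2.toLp H) : Lp (α := E) ℂ 2 volume) x := by
    apply ae_eq_of_integral_contDiff_smul_eq hcont.locallyIntegrable
      ((Lp.memLp _).locallyIntegrable (by norm_num))
    intro g hg hgc
    have hg' : ContDiff ℝ ∞ (fun x => (g x : ℂ)) := Complex.ofRealCLM.contDiff.comp hg
    have hgc' : HasCompactSupport (fun x => (g x : ℂ)) :=
      hgc.comp_left (g := fun x : ℝ => (x : ℂ)) (by simp)
    -- Both sides are paired with `g` by moving the transform onto `φ = g`.
    set φ : 𝓢(E, ℂ) := hgc'.toSchwartzMap hg'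
    have key := congrArg (fun T : 𝓢'(E, ℂ) => T φ) (Lp.fourier_toTemperedDistribution_eq (h2.toLp H))
    simp only [TemperedDistribution.fourier_apply, Lp.toTemperedDistribution_apply] at key
    have e1 : ∫ x, (𝓕 φ) x • (h2.toLp H) x = ∫ x, (𝓕 φ) x • H x := by
      apply integral_congr_ae
      filter_upwards [h2.coeFn_toLp] with x hx
      rw [hx]
    have e2 : ∫ x, (𝓕 φ) x • H x = ∫ x, φ x • 𝓕 H x := by
      have := VectorFourier.integral_fourierIntegral_smul_eq_flip (μ := (volume : Measure E))
        (ν := (volume : Measure E)) (L := innerₗ E) (f := φ) (g := H)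
        Real.continuous_fourierChar continuous_inner φ.integrable h1
      rw [flip_innerₗ] at this
      exact this
    rw [e1, e2] at key
    exact key
  rw [eLpNorm_congr_ae hae]
  have := Lp.norm_fourier_eq (h2.toLp H)
  rw [Lp.norm_def, Lp.norm_def] at this
  have := (ENNReal.toReal_eq_toReal_iff' (Lp.eLpNorm_ne_top _) (Lp.eLpNorm_ne_top _)).1 this
  rw [this, eLpNorm_congr_ae h2.coeFn_toLp]

/-- The bilinear `L⁴` estimate: since `(𝓕 G)² = 𝓕 (G ⋆ G)`, Plancherel reduces the claim to
`‖G ⋆ G‖₂`, and Cauchy–Schwarz on the fibre `{r ∈ A, q - r ∈ A}` gives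
`|G ⋆ G|² ≤ M · (|G|² ⋆ |G|²)`. -/
theorem lintegral_fourier_pow_four_le {E : Type*} [NormedAddCommGroup E] [InnerProductSpace ℝ E]
    [FiniteDimensional ℝ E] [MeasurableSpace E] [BorelSpace E] {G : E → ℂ} (hm : Measurable G)
    (h1 : Integrable G) (h2 : MemLp G 2) {A : Set E} (hA : MeasurableSet A)
    (hG : ∀ x, G x ≠ 0 → x ∈ A) {M : ℝ≥0∞} (hM : M ≠ ⊤)
    (hAM : ∀ q, volume {r | r ∈ A ∧ q - r ∈ A} ≤ M) :
    ∫⁻ x, ‖𝓕 G x‖ₑ ^ 4 ≤ M * (∫⁻ x, ‖G x‖ₑ ^ 2) ^ 2 := by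
  set H : E → ℂ := G ⋆[ContinuousLinearMap.mul ℂ ℂ] G with hH
  have hHi : Integrable H := h1.integrable_convolution _ h1
  have hfin : ∫⁻ x, ‖G x‖ₑ ^ 2 < ⊤ := by
    have := h2.2
    rw [eLpNorm_lt_top_iff_lintegral_rpow_enorm_lt_top (by norm_num) (by norm_num)] at this
    simpa using this
  have hpt : ∀ q, ‖H q‖ₑ ^ 2 ≤ M * ∫⁻ r, ‖G r‖ₑ ^ 2 * ‖G (q - r)‖ₑ ^ 2 := by
    intro q
    have hSm : MeasurableSet {r | r ∈ A ∧ q - r ∈ A} :=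
      hA.inter ((measurable_const.sub measurable_id) hA)
    have hb : ‖H q‖ₑ ≤ ∫⁻ r, ({r | r ∈ A ∧ q - r ∈ A}.indicator 1 r) * (‖G r‖ₑ * ‖G (q - r)‖ₑ) := by
      refine (enorm_integral_le_lintegral_enorm _).trans (lintegral_mono fun r => ?_)
      by_cases hr : r ∈ A ∧ q - r ∈ A
      · simp [Set.indicator, hr, enorm_mul]
      · have : G r * G (q - r) = 0 := by
          by_contra hne
          exact hr ⟨hG _ (left_ne_zero_of_mul hne), hG _ (right_ne_zero_of_mul hne)⟩
        simp [this]
    have hmm : Measurable fun r => ‖G r‖ₑ * ‖G (q - r)‖ₑ := by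
      fun_prop
    have hcs := ENNReal.lintegral_mul_le_Lp_mul_Lq (volume : Measure E) Real.HolderConjugate.two_two
      (f := {r | r ∈ A ∧ q - r ∈ A}.indicator 1) (g := fun r => ‖G r‖ₑ * ‖G (q - r)‖ₑ)
      ((measurable_one.indicator hSm).aemeasurable) hmm.aemeasurable
    have hind : ∫⁻ r, ({r | r ∈ A ∧ q - r ∈ A}.indicator (1 : E → ℝ≥0∞) r) ^ (2:ℝ) ≤ M := by
      refine le_trans (le_of_eq ?_) (hAM q)
      rw [← lintegral_indicator_one hSm]
      congr 1; ext r
      by_cases hr : r ∈ A ∧ q - r ∈ A <;> simp [Set.indicator, hr]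
    have h3 := hb.trans hcs
    calc ‖H q‖ₑ ^ 2 ≤ _ := pow_le_pow_left' h3 2
      _ = (∫⁻ r, ({r | r ∈ A ∧ q - r ∈ A}.indicator (1 : E → ℝ≥0∞) r) ^ (2:ℝ)) *
          ∫⁻ r, (‖G r‖ₑ * ‖G (q - r)‖ₑ) ^ (2:ℝ) := by
        rw [mul_pow, ← ENNReal.rpow_natCast, ← ENNReal.rpow_natCast, ← ENNReal.rpow_mul,
          ← ENNReal.rpow_mul]
        norm_num
      _ ≤ _ := by
        gcongr
        exact le_of_eq (by rw [ENNReal.rpow_two, mul_pow])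
  have hHint : ∫⁻ q, ‖H q‖ₑ ^ 2 ≤ M * (∫⁻ x, ‖G x‖ₑ ^ 2) ^ 2 := by
    calc ∫⁻ q, ‖H q‖ₑ ^ 2 ≤ ∫⁻ q, M * ∫⁻ r, ‖G r‖ₑ ^ 2 * ‖G (q - r)‖ₑ ^ 2 := lintegral_mono hpt
      _ = M * ∫⁻ q, ∫⁻ r, ‖G r‖ₑ ^ 2 * ‖G (q - r)‖ₑ ^ 2 := lintegral_const_mul' _ _ hM
      _ = M * ∫⁻ r, ∫⁻ q, ‖G r‖ₑ ^ 2 * ‖G (q - r)‖ₑ ^ 2 := by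
        rw [lintegral_lintegral_swap]
        exact Measurable.aemeasurable (by fun_prop)
      _ = M * ∫⁻ r, ‖G r‖ₑ ^ 2 * ∫⁻ q, ‖G q‖ₑ ^ 2 := by
        congr 2; ext r
        rw [lintegral_const_mul _ (by fun_prop),
          lintegral_sub_right_eq_self (fun q => ‖G q‖ₑ ^ 2) r]
      _ = _ := by
        rw [lintegral_mul_const _ (by fun_prop), sq]
  have hH2 : MemLp H 2 := by
    refine ⟨hHi.1, ?_⟩
    rw [eLpNorm_lt_top_iff_lintegral_rpow_enorm_lt_top (by norm_num) (by norm_num)]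
    refine lt_of_le_of_lt (le_trans (le_of_eq ?_) hHint) ?_
    · simp
    · exact ENNReal.mul_lt_top hM.lt_top (ENNReal.pow_lt_top hfin)
  have hP := eLpNorm_fourier_two_le hHi hH2
  rw [eLpNorm_eq_lintegral_rpow_enorm_toReal (by norm_num) (by norm_num),
    eLpNorm_eq_lintegral_rpow_enorm_toReal (by norm_num) (by norm_num)] at hP
  have hP' := (ENNReal.rpow_le_rpow_iff (by norm_num)).1 hP
  simp only [ENNReal.toReal_ofNat, ENNReal.rpow_two] at hP'
  refine le_trans (le_of_eq ?_) (hP'.trans hHint)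
  congr 1; ext x
  rw [hH, Real.fourier_mul_convolution_eq h1 h1, enorm_mul]
  ring

/-! ### The resonance set -/

/-- Clarkson's inequality for real numbers, as a lower bound for the second difference of `x ^ p`.
It combines superadditivity and convexity of `x ^ (p / 2)` with the parallelogram identity
`((y + 2d)² + y²) / 2 = (y + d)² + d²`. -/
theorem clarkson_rpow {p y d : ℝ} (hp : 2 ≤ p) (hy : 0 ≤ y) (hd : 0 ≤ d) :
    2 * (y + d) ^ p + 2 * d ^ p ≤ (y + 2 * d) ^ p + y ^ p := by
  have hp2 : 1 ≤ p / 2 := by linarith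
  have sqp : ∀ x : ℝ, 0 ≤ x → (x ^ 2) ^ (p / 2) = x ^ p := by
    intro x hx
    rw [← Real.rpow_natCast, ← Real.rpow_mul hx]
    congr 1; push_cast; ring
  have h1 := Real.add_rpow_le_rpow_add (sq_nonneg (y + d)) (sq_nonneg d) hp2
  have h2 := (convexOn_rpow hp2).2 (Set.mem_Ici.2 (sq_nonneg (y + 2 * d)))
    (Set.mem_Ici.2 (sq_nonneg y)) (by norm_num : (0 : ℝ) ≤ 1 / 2) (by norm_num : (0 : ℝ) ≤ 1 / 2)
    (by norm_num)
  simp only [smul_eq_mul] at h2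
  rw [show 1 / 2 * (y + 2 * d) ^ 2 + 1 / 2 * y ^ 2 = (y + d) ^ 2 + d ^ 2 by ring] at h2
  rw [sqp _ (by positivity), sqp _ hd] at h1
  rw [sqp _ (by positivity), sqp _ hy] at h2
  linarith

theorem rpow_increment_mono {p x s d : ℝ} (hp : 1 ≤ p) (hx : 0 ≤ x) (hxs : x ≤ s) (hd : 0 ≤ d) :
    (x + d) ^ p - x ^ p ≤ (s + d) ^ p - s ^ p := by
  rcases hd.eq_or_lt with rfl | hd
  · simp
  have hT : 0 < s + d - x := by linarith
  have hc := (convexOn_rpow hp).2 (Set.mem_Ici.2 hx) (Set.mem_Ici.2 (by linarith : 0 ≤ s + d))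
  have hs0 : 0 ≤ s - x := by linarith
  have h1 := hc (show 0 ≤ d / (s + d - x) by positivity)
    (show 0 ≤ (s - x) / (s + d - x) by positivity) (by field_simp; ring)
  have h2 := hc (show 0 ≤ (s - x) / (s + d - x) by positivity)
    (show 0 ≤ d / (s + d - x) by positivity) (by field_simp; ring)
  simp only [smul_eq_mul] at h1 h2
  rw [show d / (s + d - x) * x + (s - x) / (s + d - x) * (s + d) = s by field_simp; ring] at h1
  rw [show (s - x) / (s + d - x) * x + d / (s + d - x) * (s + d) = x + d by
    field_simp; ring] at h2
  have h3 : d / (s + d - x) + (s - x) / (s + d - x) = 1 := by field_simp; ring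
  have h4 : d / (s + d - x) = 1 - (s - x) / (s + d - x) := by linarith
  rw [h4] at h1 h2
  linarith

/-- On `[q/2, q]` the function `x ↦ x ^ p + (q - x) ^ p` grows at least like a `p`-th power. -/
theorem resonance_gap {p q s t : ℝ} (hp : 2 ≤ p) (hs : q / 2 ≤ s) (hst : s ≤ t) (ht : t ≤ q) :
    2 * (t - s) ^ p ≤ (t ^ p + (q - t) ^ p) - (s ^ p + (q - s) ^ p) := by
  have h1 := clarkson_rpow hp (sub_nonneg.2 ht) (sub_nonneg.2 hst)
  have h2 := rpow_increment_mono (p := p) (x := q - s) (s := s) (d := t - s) (by linarith)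
    (by linarith) (by linarith) (by linarith)
  rw [show q - t + (t - s) = q - s by ring, show q - t + 2 * (t - s) = q - s + (t - s) by ring] at h1
  rw [show s + (t - s) = t by ring] at h2
  linarith

/-- Two points of `[q/2, q]` at which `c x ^ p + c (q - x) ^ p` is within `2L` of the same value
are at distance at most `(2L) ^ (1/p)`. -/
theorem resonance_gap' {p q c l L s t : ℝ} (hp : 2 ≤ p) (hc : 1 ≤ c) (hs : q / 2 ≤ s)
    (hst : s ≤ t) (ht : t ≤ q) (h1 : |c * s ^ p + c * (q - s) ^ p - l| ≤ 2 * L)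
    (h2 : |c * t ^ p + c * (q - t) ^ p - l| ≤ 2 * L) : t - s ≤ (2 * L) ^ (1 / p) := by
  have hg := resonance_gap hp hs hst ht
  have hd : 0 ≤ (t - s) ^ p := Real.rpow_nonneg (by linarith) _
  have hg' := mul_le_mul_of_nonneg_left hg (by linarith : 0 ≤ c)
  have : (t - s) ^ p ≤ 2 * L := by
    rw [abs_le] at h1 h2
    nlinarith
  calc t - s = ((t - s) ^ p) ^ (1 / p) := by
        rw [← Real.rpow_mul (by linarith)]
        rw [mul_one_div_cancel (by linarith), Real.rpow_one]
    _ ≤ _ := Real.rpow_le_rpow hd this (by positivity)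

theorem volume_resonance_le {p c : ℝ} (hp : 2 ≤ p) (hc : 1 ≤ c) (q l L : ℝ) :
    volume {x : ℝ | 0 ≤ x ∧ x ≤ q ∧ |c * x ^ p + c * (q - x) ^ p - l| ≤ 2 * L} ≤
      2 * ENNReal.ofReal ((2 * L) ^ (1 / p)) := by
  set S := {x : ℝ | 0 ≤ x ∧ x ≤ q ∧ |c * x ^ p + c * (q - x) ^ p - l| ≤ 2 * L}
  -- The reflection `x ↦ q - x` preserves the condition and exchanges the two halves of `[0, q]`.
  have hrefl : ∀ x ∈ S, |c * (q - x) ^ p + c * (q - (q - x)) ^ p - l| ≤ 2 * L := by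
    intro x hx
    rw [sub_sub_cancel, add_comm (c * (q - x) ^ p)]
    exact hx.2.2
  have key : ∀ T : Set ℝ, (∀ s ∈ T, ∀ t ∈ T, s ≤ t → t - s ≤ (2 * L) ^ (1 / p)) →
      volume T ≤ ENNReal.ofReal ((2 * L) ^ (1 / p)) := by
    intro T hT
    refine (Real.volume_le_diam T).trans (Metric.ediam_le fun s hs t ht => ?_)
    rw [edist_dist]
    apply ENNReal.ofReal_le_ofReal
    rw [Real.dist_eq]
    rcases le_total s t with h | h
    · rw [abs_sub_comm, abs_of_nonneg (by linarith)]; exact hT s hs t ht h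
    · rw [abs_of_nonneg (by linarith)]; exact hT t ht s hs h
  have hcov : S ⊆ (S ∩ Set.Ici (q / 2)) ∪ (S ∩ Set.Iic (q / 2)) := by
    intro x hx
    rcases le_total (q / 2) x with h | h
    · exact Or.inl ⟨hx, h⟩
    · exact Or.inr ⟨hx, h⟩
  refine (measure_mono hcov).trans ((measure_union_le _ _).trans ?_)
  rw [two_mul]
  gcongr
  · apply key
    rintro s ⟨hs, hs'⟩ t ⟨ht, ht'⟩ hst
    exact resonance_gap' hp hc hs' hst ht.2.1 hs.2.2 ht.2.2
  · apply key
    rintro s ⟨hs, hs'⟩ t ⟨ht, ht'⟩ hst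
    have hs'' : s ≤ q / 2 := hs'
    have ht'' : t ≤ q / 2 := ht'
    have := resonance_gap' (s := q - t) (t := q - s) hp hc (by linarith) (by linarith)
      (by linarith [hs.1]) (hrefl t ht) (hrefl s hs)
    linarith

/-- The half `ξ ≥ 0` of the strip of modulation at most `L`, in frequency variables rescaled by
`2π` to fit the convention `e^{2πi⟨·,·⟩}` of Mathlib's Fourier transform. -/
def strip (a L : ℝ) : Set (ℝ × ℝ) :=
  {w | 0 ≤ w.1 ∧ |2 * Real.pi * w.2 - disp a (2 * Real.pi * w.1)| ≤ L}

theorem measurable_disp (a : ℝ) : Measurable (disp a) := by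
  unfold disp; fun_prop

theorem measurableSet_strip (a L : ℝ) : MeasurableSet (strip a L) := by
  have := measurable_disp a
  unfold strip
  apply MeasurableSet.inter
  · exact measurableSet_le measurable_const measurable_fst
  · exact measurableSet_le (f := fun w : ℝ × ℝ => |2 * Real.pi * w.2 - disp a (2 * Real.pi * w.1)|)
      (by simp only [← Real.norm_eq_abs]; fun_prop) measurable_const

/-- On the strip, dividing by `2π ≥ 1`, the second coordinate lies within `L` of a multiple of the
pure power `w.1 ^ (2 + a)`. -/
theorem strip_mem {a L : ℝ} (ha : 0 ≤ a) (hL : 0 ≤ L) {w : ℝ × ℝ} (hw : w ∈ strip a L) :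
    0 ≤ w.1 ∧ |w.2 - (2 * Real.pi) ^ (1 + a) * w.1 ^ (2 + a)| ≤ L := by
  obtain ⟨h0, h⟩ := hw
  have hpi : 1 ≤ 2 * Real.pi := by linarith [Real.pi_gt_three]
  refine ⟨h0, ?_⟩
  have e : 2 * Real.pi * w.2 - disp a (2 * Real.pi * w.1) =
      2 * Real.pi * (w.2 - (2 * Real.pi) ^ (1 + a) * w.1 ^ (2 + a)) := by
    have e2 : w.1 ^ (2 + a) = w.1 * w.1 ^ (1 + a) := by
      rw [show (2 : ℝ) + a = 1 + (1 + a) by ring, Real.rpow_add_of_nonneg h0 (by norm_num) (by linarith),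
        Real.rpow_one]
    rw [disp, abs_of_nonneg (by positivity), Real.mul_rpow (by positivity) h0, e2]
    ring
  rw [e, abs_mul, abs_of_pos (by positivity)] at h
  nlinarith [abs_nonneg (w.2 - (2 * Real.pi) ^ (1 + a) * w.1 ^ (2 + a))]

/-- By Fubini: each vertical fibre has length at most `2L`, and it is empty unless the horizontal
coordinate lies in the resonance set of `volume_resonance_le`. -/
theorem volume_strip_inter_le {a L : ℝ} (ha : 0 ≤ a) (hL : 0 ≤ L) (q : ℝ × ℝ) :
    volume {r : ℝ × ℝ | r ∈ strip a L ∧ q - r ∈ strip a L} ≤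
      ENNReal.ofReal (2 * L) * (2 * ENNReal.ofReal ((2 * L) ^ (1 / (2 + a)))) := by
  set c := (2 * Real.pi) ^ (1 + a) with hc
  have hc1 : 1 ≤ c := Real.one_le_rpow (by linarith [Real.pi_gt_three]) (by linarith)
  set S := {x : ℝ | 0 ≤ x ∧ x ≤ q.1 ∧
    |c * x ^ (2 + a) + c * (q.1 - x) ^ (2 + a) - q.2| ≤ 2 * L} with hS
  have hSm : MeasurableSet S := by
    apply MeasurableSet.inter (measurableSet_le measurable_const measurable_id)
    apply MeasurableSet.inter (measurableSet_le measurable_id measurable_const)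
    exact measurableSet_le
      (f := fun x : ℝ => |c * x ^ (2 + a) + c * (q.1 - x) ^ (2 + a) - q.2|)
      (by simp only [← Real.norm_eq_abs]; fun_prop) measurable_const
  have hm : MeasurableSet {r : ℝ × ℝ | r ∈ strip a L ∧ q - r ∈ strip a L} :=
    (measurableSet_strip a L).inter
      ((measurable_const.sub measurable_id) (measurableSet_strip a L))
  rw [Measure.volume_eq_prod, Measure.prod_apply hm]
  calc _ ≤ ∫⁻ x, S.indicator (fun _ => ENNReal.ofReal (2 * L)) x := by
        apply lintegral_mono
        intro x
        by_cases hx : x ∈ S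
        · rw [Set.indicator_of_mem hx]
          calc _ ≤ volume (Set.Icc (c * x ^ (2 + a) - L) (c * x ^ (2 + a) + L)) := by
                apply measure_mono
                rintro y ⟨hy, -⟩
                have := abs_le.1 (strip_mem ha hL hy).2
                simp only [Set.mem_Icc]
                constructor <;> linarith
            _ = _ := by rw [Real.volume_Icc]; congr 1; ring
        · rw [Set.indicator_of_notMem hx]
          refine le_of_eq ?_
          convert measure_empty (μ := (volume : Measure ℝ))
          rw [Set.eq_empty_iff_forall_notMem]
          rintro y ⟨hy1, hy2⟩
          apply hx
          have h1 := strip_mem ha hL hy1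
          have h2 := strip_mem ha hL hy2
          simp only [Prod.fst_sub, Prod.snd_sub] at h1 h2
          refine ⟨h1.1, by linarith [h2.1], ?_⟩
          have h1' := abs_le.1 h1.2
          have h2' := abs_le.1 h2.2
          rw [abs_le]
          constructor <;> linarith
    _ = ENNReal.ofReal (2 * L) * volume S := lintegral_indicator_const hSm _
    _ ≤ _ := by
        gcongr
        exact volume_resonance_le (by linarith) hc1 _ _ _

/-! ### A single dyadic piece -/

/-- The plane `ℝ²` with its Euclidean inner product; the product type `ℝ × ℝ` has the sup norm, so
`𝓕` is not available on it. -/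
abbrev Plane := WithLp 2 (ℝ × ℝ)

/-- The modulation `λ - ω(ξ)` at the frequency `(ξ, λ) = 2π w`. -/
def modul (a : ℝ) (w : Plane) : ℝ := 2 * Real.pi * w.snd - disp a (2 * Real.pi * w.fst)

theorem disp_neg (a ξ : ℝ) : disp a (-ξ) = - disp a ξ := by
  simp [disp]

theorem measurable_modul (a : ℝ) : Measurable (modul a) := by
  have := measurable_disp a
  have h1 : Measurable (fun w : Plane => w.fst) := (WithLp.fstL 2 ℝ ℝ ℝ).continuous.measurable
  have h2 : Measurable (fun w : Plane => w.snd) := (WithLp.sndL 2 ℝ ℝ ℝ).continuous.measurable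
  unfold modul
  fun_prop

theorem eLpNorm_fourier_le_of_volume {G : Plane → ℂ} (hm : Measurable G)
    (h1 : Integrable G) (h2 : MemLp G 2) {A : Set Plane} (hA : MeasurableSet A)
    (hG : ∀ x, G x ≠ 0 → x ∈ A) {M : ℝ≥0∞} (hM : M ≠ ⊤)
    (hAM : ∀ q, volume {r | r ∈ A ∧ q - r ∈ A} ≤ M) :
    eLpNorm (𝓕 G) 4 ≤ M ^ (1 / 4 : ℝ) * eLpNorm G 2 := by
  have h := lintegral_fourier_pow_four_le hm h1 h2 hA hG hM hAM
  rw [eLpNorm_eq_lintegral_rpow_enorm_toReal (by norm_num) (by norm_num),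
    eLpNorm_eq_lintegral_rpow_enorm_toReal (by norm_num) (by norm_num)]
  simp only [ENNReal.toReal_ofNat, ENNReal.rpow_ofNat]
  calc _ ≤ (M * (∫⁻ x, ‖G x‖ₑ ^ 2) ^ 2) ^ (1 / 4 : ℝ) := by gcongr
    _ = _ := by
      rw [ENNReal.mul_rpow_of_nonneg _ _ (by norm_num), ← ENNReal.rpow_natCast,
        ← ENNReal.rpow_mul]
      norm_num

/-- The bound of `volume_strip_inter_le` for the measure of `{r ∈ A, q - r ∈ A}`, `A` the strip of
width `L`. -/
def bandConst (a L : ℝ) : ℝ≥0∞ :=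
  ENNReal.ofReal (2 * L) * (2 * ENNReal.ofReal ((2 * L) ^ (1 / (2 + a))))

theorem volume_pos_le {a L : ℝ} (ha : 0 ≤ a) (hL : 0 ≤ L) (q : Plane) :
    volume {r : Plane | r.ofLp ∈ strip a L ∧ (q - r).ofLp ∈ strip a L} ≤ bandConst a L := by
  have hm : MeasurableSet {r : ℝ × ℝ | r ∈ strip a L ∧ q.ofLp - r ∈ strip a L} :=
    (measurableSet_strip a L).inter
      ((measurable_const.sub measurable_id) (measurableSet_strip a L))
  have := (WithLp.volume_preserving_ofLp ℝ ℝ).measure_preimage hm.nullMeasurableSet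
  refine le_trans (le_of_eq ?_) (volume_strip_inter_le ha hL q.ofLp)
  rw [← this]
  rfl

theorem volume_neg_le {a L : ℝ} (ha : 0 ≤ a) (hL : 0 ≤ L) (q : Plane) :
    volume {r : Plane | (-r).ofLp ∈ strip a L ∧ (-(q - r)).ofLp ∈ strip a L} ≤ bandConst a L := by
  refine le_trans (le_of_eq ?_) (volume_pos_le ha hL (-q))
  rw [← Measure.measure_preimage_neg]
  congr 1
  ext r
  simp [sub_eq_add_neg, add_comm]

/-- The source of the exponent: `(1 + 1/(2+a)) / 4 = (3+a) / (4(2+a))`. -/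
theorem bandConst_rpow {a : ℝ} (ha : 0 ≤ a) (j : ℕ) :
    bandConst a (2 ^ (j + 1)) ^ (1 / 4 : ℝ) =
      ENNReal.ofReal (2 ^ (1 / 4 : ℝ) * 4 ^ ((3 + a) / (4 * (2 + a))) *
        2 ^ ((j : ℝ) * ((3 + a) / (4 * (2 + a))))) := by
  have hL : (0 : ℝ) < 2 * 2 ^ (j + 1) := by positivity
  rw [bandConst, ← ENNReal.ofReal_ofNat 2, ← ENNReal.ofReal_mul (by norm_num),
    ← ENNReal.ofReal_mul hL.le,
    ENNReal.ofReal_rpow_of_nonneg (by positivity) (by norm_num)]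
  congr 1
  have e : (2 * 2 ^ (j + 1) : ℝ) * (2 * (2 * 2 ^ (j + 1)) ^ (1 / (2 + a))) =
      2 * (2 * 2 ^ (j + 1)) ^ (1 + 1 / (2 + a)) := by
    rw [Real.rpow_add hL, Real.rpow_one]; ring
  rw [e, Real.mul_rpow (by norm_num) (by positivity), ← Real.rpow_mul hL.le, mul_assoc]
  congr 1
  rw [show (1 + 1 / (2 + a)) * (1 / 4) = (3 + a) / (4 * (2 + a)) by
    have : 2 + a ≠ 0 := by linarith
    field_simp; ring]
  rw [show (2 * 2 ^ (j + 1) : ℝ) = 4 * 2 ^ (j : ℝ) by rw [Real.rpow_natCast]; ring,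
    Real.mul_rpow (by norm_num) (by positivity), ← Real.rpow_mul (by norm_num)]

/-- The `L⁴` estimate for a function supported at modulation at most `2 ^ (j + 1)`. The half-planes
`ξ ≥ 0` and `ξ < 0` are treated separately, because the resonance function
`x ↦ ω(x) + ω(q - x)` is only controlled when `x` and `q - x` have the same sign. -/
theorem eLpNorm_fourier_piece {a : ℝ} (ha : 0 ≤ a) (j : ℕ) {G : Plane → ℂ} (hm : Measurable G)
    (h1 : Integrable G) (h2 : MemLp G 2) (hG : ∀ w, G w ≠ 0 → |modul a w| ≤ 2 ^ (j + 1)) :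
    eLpNorm (𝓕 G) 4 ≤ ENNReal.ofReal (2 ^ (1 / 4 : ℝ) * 4 ^ ((3 + a) / (4 * (2 + a))) *
        2 ^ ((j : ℝ) * ((3 + a) / (4 * (2 + a))))) * (2 * eLpNorm G 2) := by
  rw [← bandConst_rpow ha]
  set L : ℝ := 2 ^ (j + 1)
  have hL : 0 ≤ L := by positivity
  have hMtop : bandConst a L ≠ ⊤ := by unfold bandConst; finiteness
  set P : Set Plane := {w | 0 ≤ w.fst}
  have hP : MeasurableSet P := measurableSet_le measurable_const
    (WithLp.fstL 2 ℝ ℝ ℝ).continuous.measurable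
  have hofLp : Measurable (WithLp.ofLp : Plane → ℝ × ℝ) :=
    (WithLp.volume_preserving_ofLp ℝ ℝ).measurable
  have hsplit : 𝓕 G = 𝓕 (P.indicator G) + 𝓕 (Pᶜ.indicator G) := by
    have : G = P.indicator G + Pᶜ.indicator G := by rw [Set.indicator_self_add_compl]
    conv_lhs => rw [this]
    exact VectorFourier.fourierIntegral_add Real.continuous_fourierChar continuous_inner
      (h1.indicator hP) (h1.indicator hP.compl)
  have hcont : ∀ S : Set Plane, MeasurableSet S → Continuous (𝓕 (S.indicator G)) := fun S hS =>
    VectorFourier.fourierIntegral_continuous Real.continuous_fourierChar continuous_inner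
      (h1.indicator hS)
  have hpos : eLpNorm (𝓕 (P.indicator G)) 4 ≤ bandConst a L ^ (1 / 4 : ℝ) * eLpNorm G 2 := by
    refine (eLpNorm_fourier_le_of_volume (hm.indicator hP) (h1.indicator hP) (h2.indicator hP)
      (hofLp (measurableSet_strip a L)) ?_ hMtop (volume_pos_le ha hL)).trans ?_
    · intro w hw
      have hw' := Set.indicator_apply_ne_zero.1 hw
      exact ⟨hw'.1, hG w hw'.2⟩
    · gcongr
      exact eLpNorm_indicator_le G
  have hneg : eLpNorm (𝓕 (Pᶜ.indicator G)) 4 ≤ bandConst a L ^ (1 / 4 : ℝ) * eLpNorm G 2 := by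
    refine (eLpNorm_fourier_le_of_volume (hm.indicator hP.compl) (h1.indicator hP.compl)
      (h2.indicator hP.compl) (A := {w | (-w).ofLp ∈ strip a L})
      ((hofLp.comp measurable_neg) (measurableSet_strip a L)) ?_ hMtop
      (volume_neg_le ha hL)).trans ?_
    · intro w hw
      have hw' := Set.indicator_apply_ne_zero.1 hw
      have h0 : ¬ (0 ≤ w.fst) := hw'.1
      have h3 := hG w hw'.2
      refine ⟨?_, ?_⟩
      · simp; linarith
      · rw [modul, ← abs_neg] at h3
        convert h3 using 2
        simp [disp_neg]; ring
    · gcongr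
      exact eLpNorm_indicator_le G
  rw [hsplit]
  refine (eLpNorm_add_le (hcont P hP).aestronglyMeasurable
    (hcont _ hP.compl).aestronglyMeasurable (by norm_num)).trans ?_
  refine (add_le_add hpos hneg).trans (le_of_eq ?_)
  ring

/-! ### Summation over the dyadic pieces -/

theorem chiJ_mem {χ₀ χ : ℝ → ℝ} (hχ : DyadicCutoffs χ₀ χ) (j : ℕ) (z : ℝ) :
    0 ≤ chiJ χ₀ χ j z ∧ chiJ χ₀ χ j z ≤ 1 := by
  unfold chiJ
  split_ifs
  · exact hχ.mem0 z
  · exact hχ.mem1 _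

theorem measurable_chiJ {χ₀ χ : ℝ → ℝ} (hχ : DyadicCutoffs χ₀ χ) (j : ℕ) :
    Measurable (chiJ χ₀ χ j) := by
  have h0 := hχ.smooth0.continuous.measurable
  have h1 := hχ.smooth1.continuous.measurable
  unfold chiJ
  split_ifs
  · exact h0
  · fun_prop

theorem chiJ_supp {χ₀ χ : ℝ → ℝ} (hχ : DyadicCutoffs χ₀ χ) (j : ℕ) {z : ℝ}
    (hz : chiJ χ₀ χ j z ≠ 0) : |z| ≤ 2 ^ (j + 1) ∧ (j ≠ 0 → 2 ^ j ≤ 2 * |z|) := by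
  unfold chiJ at hz
  split_ifs at hz with hj
  · subst hj
    refine ⟨?_, fun h => (h rfl).elim⟩
    by_contra h
    exact hz (hχ.supp0 z (by simpa using h))
  · have h := hχ.supp1 _ hz
    rw [abs_mul, Real.rpow_neg (by norm_num), Real.rpow_natCast, abs_of_pos (by positivity),
      inv_mul_eq_div, lt_div_iff₀ (by positivity), div_lt_iff₀ (by positivity)] at h
    exact ⟨by rw [pow_succ]; linarith, fun _ => by linarith⟩

/-- `χ_j` trades the modulation for the decay `4 ^ (-j)`; this makes the sum over `j` converge. -/
theorem chiJ_le {χ₀ χ : ℝ → ℝ} (hχ : DyadicCutoffs χ₀ χ) (j : ℕ) (z : ℝ) :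
    chiJ χ₀ χ j z ≤ ((2 : ℝ) ^ j)⁻¹ ^ 2 * (1 + 4 * z ^ 2) := by
  have hm := chiJ_mem hχ j z
  by_cases hz : chiJ χ₀ χ j z = 0
  · rw [hz]; positivity
  refine hm.2.trans ?_
  rw [inv_pow, inv_mul_eq_div, le_div_iff₀ (by positivity), one_mul]
  by_cases hj : j = 0
  · subst hj; simp; positivity
  · have h := (chiJ_supp hχ j hz).2 hj
    have := pow_le_pow_left₀ (by positivity) h 2
    rw [mul_pow, sq_abs] at this
    linarith

/-- A divergent `∑'` has the value `0`, so the partition hypothesis carries summability. -/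
theorem hasSum_chiJ {χ₀ χ : ℝ → ℝ} (hχ : DyadicCutoffs χ₀ χ) (z : ℝ) :
    HasSum (fun j => chiJ χ₀ χ j z) 1 := by
  have h := hχ.partition z
  have hs : Summable (fun j => chiJ χ₀ χ j z) := by
    by_contra hn
    rw [tsum_eq_zero_of_not_summable hn] at h
    exact zero_ne_one h
  rw [← h]
  exact hs.hasSum

theorem abs_modul_le {a : ℝ} (ha : a ∈ Set.Icc (0 : ℝ) 1) (w : Plane) :
    |modul a w| ≤ 2 * (2 * Real.pi) ^ 3 * (1 + ‖w‖) ^ 3 := by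
  have hpi : 1 ≤ 2 * Real.pi := by linarith [Real.pi_gt_three]
  set c := 2 * Real.pi
  have h1 : |w.fst| ≤ ‖w‖ := WithLp.norm_fst_le ℝ w
  have h2 : |w.snd| ≤ ‖w‖ := WithLp.norm_snd_le ℝ w
  have hR : 1 ≤ c * (1 + ‖w‖) := by nlinarith [norm_nonneg w]
  have hd : |disp a (c * w.fst)| ≤ (c * (1 + ‖w‖)) ^ 3 := by
    rw [disp, abs_mul, abs_of_nonneg (Real.rpow_nonneg (abs_nonneg _) _)]
    have hx : |c * w.fst| ≤ c * (1 + ‖w‖) := by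
      rw [abs_mul, abs_of_pos (by linarith)]
      gcongr; linarith
    calc |c * w.fst| * |c * w.fst| ^ (1 + a)
        ≤ (c * (1 + ‖w‖)) * (c * (1 + ‖w‖)) ^ (1 + a) := by
          gcongr; linarith [ha.1]
      _ ≤ (c * (1 + ‖w‖)) * (c * (1 + ‖w‖)) ^ (2 : ℝ) := by
          gcongr; linarith [ha.2]
      _ = _ := by rw [Real.rpow_two]; ring
  have hs : |c * w.snd| ≤ (c * (1 + ‖w‖)) ^ 3 := by
    rw [abs_mul, abs_of_pos (by linarith)]
    calc c * |w.snd| ≤ c * (1 + ‖w‖) := by gcongr; linarith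
      _ ≤ _ := le_self_pow₀ hR (by norm_num)
  unfold modul
  calc _ ≤ |c * w.snd| + |disp a (c * w.fst)| := abs_sub _ _
    _ ≤ _ := by
      have h : 2 * c ^ 3 * (1 + ‖w‖) ^ 3 = 2 * (c * (1 + ‖w‖)) ^ 3 := by ring
      rw [h]; linarith

theorem integrable_weight {a : ℝ} (ha : a ∈ Set.Icc (0 : ℝ) 1) (Φ : 𝓢(Plane, ℂ)) :
    Integrable (fun w => (1 + 4 * modul a w ^ 2) * ‖Φ w‖ ^ 2) := by
  have hmm := measurable_modul a
  set K := 2 ^ 6 * (Finset.Iic (6, 0)).sup (fun m => SchwartzMap.seminorm ℝ m.1 m.2) Φ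
  set D : ℝ := 1 + 4 * (2 * (2 * Real.pi) ^ 3) ^ 2
  have hΦ : Measurable Φ := Φ.continuous.measurable
  refine Integrable.mono' ((Φ.integrable.norm).const_mul (D * K)) ?_ ?_
  · exact Measurable.aestronglyMeasurable (by fun_prop)
  · refine Filter.Eventually.of_forall fun w => ?_
    have hK : (1 + ‖w‖) ^ 6 * ‖Φ w‖ ≤ K := by
      have := SchwartzMap.one_add_le_sup_seminorm_apply (𝕜 := ℝ) (m := (6, 0)) (k := 6) (n := 0)
        le_rfl le_rfl Φ w
      simpa using this
    have hm : 1 + 4 * modul a w ^ 2 ≤ D * (1 + ‖w‖) ^ 6 := by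
      have h1 := pow_le_pow_left₀ (abs_nonneg _) (abs_modul_le ha w) 2
      rw [sq_abs, mul_pow, ← pow_mul] at h1
      have h2 : 1 ≤ (1 + ‖w‖) ^ (3 * 2) := one_le_pow₀ (by linarith [norm_nonneg w])
      simp only [D]
      norm_num at h1 h2 ⊢
      nlinarith
    rw [Real.norm_of_nonneg (by positivity)]
    calc (1 + 4 * modul a w ^ 2) * ‖Φ w‖ ^ 2 ≤ (D * (1 + ‖w‖) ^ 6) * ‖Φ w‖ ^ 2 := by gcongr
      _ = D * ((1 + ‖w‖) ^ 6 * ‖Φ w‖) * ‖Φ w‖ := by ring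
      _ ≤ D * K * ‖Φ w‖ := by gcongr

/-- The squared `L²` mass of `Φ` in the `j`-th dyadic modulation band. -/
def energy (a : ℝ) (χ₀ χ : ℝ → ℝ) (Φ : Plane → ℂ) (j : ℕ) : ℝ :=
  ∫ w, chiJ χ₀ χ j (modul a w) * ‖Φ w‖ ^ 2

theorem energy_nonneg {a : ℝ} {χ₀ χ : ℝ → ℝ} (hχ : DyadicCutoffs χ₀ χ) (Φ : Plane → ℂ) (j : ℕ) :
    0 ≤ energy a χ₀ χ Φ j :=
  integral_nonneg fun _ => mul_nonneg (chiJ_mem hχ _ _).1 (by positivity)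

theorem integrable_energy {a : ℝ} {χ₀ χ : ℝ → ℝ} (hχ : DyadicCutoffs χ₀ χ) (Φ : 𝓢(Plane, ℂ))
    (j : ℕ) : Integrable (fun w => chiJ χ₀ χ j (modul a w) * ‖Φ w‖ ^ 2) := by
  have h := (Φ.memLp 2).integrable_norm_pow (by norm_num)
  have hΦ : Measurable Φ := Φ.continuous.measurable
  have := measurable_modul a
  have := measurable_chiJ hχ j
  refine h.mono' (Measurable.aestronglyMeasurable (by fun_prop)) ?_
  refine Filter.Eventually.of_forall fun w => ?_
  have hm := chiJ_mem hχ j (modul a w)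
  rw [Real.norm_of_nonneg (mul_nonneg hm.1 (by positivity))]
  exact mul_le_of_le_one_left (by positivity) hm.2

/-- The dyadic sum converges for `b < 1`, since the `j`-th energy is `O(4 ^ (-j))`. Without this
the `∑'` on the right of the estimate could be the junk value `0`. -/
theorem summable_energy {a b : ℝ} (ha : a ∈ Set.Icc (0 : ℝ) 1) (hb : b < 1) {χ₀ χ : ℝ → ℝ}
    (hχ : DyadicCutoffs χ₀ χ) (Φ : 𝓢(Plane, ℂ)) :
    Summable fun j : ℕ => (2 : ℝ) ^ ((j : ℝ) * b) * energy a χ₀ χ Φ j ^ (1 / 2 : ℝ) := by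
  set B := ∫ w, (1 + 4 * modul a w ^ 2) * ‖Φ w‖ ^ 2
  have hB : 0 ≤ B := integral_nonneg fun _ => by positivity
  have hle : ∀ j, energy a χ₀ χ Φ j ≤ ((2 : ℝ) ^ j)⁻¹ ^ 2 * B := by
    intro j
    rw [← integral_const_mul]
    refine integral_mono (integrable_energy hχ Φ j) ((integrable_weight ha Φ).const_mul _) ?_
    intro w
    have := mul_le_mul_of_nonneg_right (chiJ_le hχ j (modul a w)) (by positivity : 0 ≤ ‖Φ w‖ ^ 2)
    simpa [mul_assoc] using this
  have hg : Summable fun j : ℕ => ((2 : ℝ) ^ (b - 1)) ^ j * B ^ (1 / 2 : ℝ) :=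
    (summable_geometric_of_lt_one (by positivity)
      (Real.rpow_lt_one_of_one_lt_of_neg (by norm_num) (by linarith))).mul_right _
  refine Summable.of_nonneg_of_le (fun j => ?_) (fun j => ?_) hg
  · exact mul_nonneg (by positivity) (Real.rpow_nonneg (energy_nonneg hχ _ _) _)
  · calc _ ≤ (2 : ℝ) ^ ((j : ℝ) * b) * (((2 : ℝ) ^ j)⁻¹ ^ 2 * B) ^ (1 / 2 : ℝ) := by
          gcongr
          · exact energy_nonneg hχ _ _
          · exact hle j
      _ = _ := by
          rw [Real.mul_rpow (by positivity) hB, ← Real.sqrt_eq_rpow (((2 : ℝ) ^ j)⁻¹ ^ 2),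
            Real.sqrt_sq (by positivity), ← mul_assoc]
          congr 1
          rw [← Real.rpow_natCast, ← Real.rpow_natCast, ← Real.rpow_neg (by norm_num),
            ← Real.rpow_add (by norm_num), ← Real.rpow_mul (by norm_num)]
          congr 1; ring

/-- The constant of the estimate, for the `2π` normalization of the Fourier transform; the leading
factor `2` counts the two half-planes. -/
def pieceConst (a : ℝ) : ℝ := 2 * (2 ^ (1 / 4 : ℝ) * 4 ^ ((3 + a) / (4 * (2 + a))))

/-- Summing the pieces: the partial sums of `∑ 𝓕 (χ_j Φ)` converge pointwise to `𝓕 Φ` by dominated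
convergence, and Fatou's lemma passes their `L⁴` bounds to the limit. -/
theorem eLpNorm_fourier_schwartz_le {a : ℝ} (ha : a ∈ Set.Icc (0 : ℝ) 1) {χ₀ χ : ℝ → ℝ}
    (hχ : DyadicCutoffs χ₀ χ) (Φ : 𝓢(Plane, ℂ)) :
    eLpNorm (𝓕 (Φ : Plane → ℂ)) 4 ≤ ENNReal.ofReal (pieceConst a *
      ∑' j : ℕ, (2 : ℝ) ^ ((j : ℝ) * ((3 + a) / (4 * (2 + a)))) *
        energy a χ₀ χ Φ j ^ (1 / 2 : ℝ)) := by
  set b := (3 + a) / (4 * (2 + a)) with hb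
  have hb1 : b < 1 := by
    rw [hb, div_lt_one (by linarith [ha.1])]; linarith [ha.1]
  have hΦm : Measurable Φ := Φ.continuous.measurable
  have hmod := measurable_modul a
  set G : ℕ → Plane → ℂ := fun j w => (chiJ χ₀ χ j (modul a w) : ℂ) * Φ w with hG
  have hGm : ∀ j, Measurable (G j) := by
    intro j
    have := measurable_chiJ hχ j
    simp only [hG]
    fun_prop
  have hGle : ∀ j w, ‖G j w‖ ≤ ‖Φ w‖ := by
    intro j w
    have hm := chiJ_mem hχ j (modul a w)
    simp only [hG, norm_mul, Complex.norm_real, Real.norm_of_nonneg hm.1]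
    exact mul_le_of_le_one_left (by positivity) hm.2
  have hGi : ∀ j, Integrable (G j) := fun j =>
    Φ.integrable.mono (hGm j).aestronglyMeasurable (Filter.Eventually.of_forall (hGle j))
  have hG2 : ∀ j, MemLp (G j) 2 := fun j =>
    (Φ.memLp 2).mono (hGm j).aestronglyMeasurable (Filter.Eventually.of_forall (hGle j))
  have hGn : ∀ j, eLpNorm (G j) 2 ≤ ENNReal.ofReal (energy a χ₀ χ Φ j ^ (1 / 2 : ℝ)) := by
    intro j
    rw [(hG2 j).eLpNorm_eq_integral_rpow_norm (by norm_num) (by norm_num)]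
    apply ENNReal.ofReal_le_ofReal
    simp only [ENNReal.toReal_ofNat, Real.rpow_two]
    rw [← one_div]
    refine Real.rpow_le_rpow (integral_nonneg fun _ => by positivity) ?_ (by norm_num)
    refine integral_mono ((hG2 j).integrable_norm_pow (by norm_num)) (integrable_energy hχ Φ j) ?_
    intro w
    have hm := chiJ_mem hχ j (modul a w)
    simp only [hG, norm_mul, Complex.norm_real, Real.norm_of_nonneg hm.1, mul_pow]
    gcongr
    nlinarith
  have hpiece : ∀ j, eLpNorm (𝓕 (G j)) 4 ≤
      ENNReal.ofReal (pieceConst a * ((2 : ℝ) ^ ((j : ℝ) * b) *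
        energy a χ₀ χ Φ j ^ (1 / 2 : ℝ))) := by
    intro j
    refine (eLpNorm_fourier_piece ha.1 j (hGm j) (hGi j) (hG2 j) ?_).trans ?_
    · intro w hw
      refine (chiJ_supp hχ j (z := modul a w) ?_).1
      have := left_ne_zero_of_mul hw
      exact_mod_cast this
    · refine (mul_le_mul_right (mul_le_mul_right (hGn j) _) _).trans (le_of_eq ?_)
      generalize energy a χ₀ χ Φ j ^ (1 / 2 : ℝ) = x
      rw [← ENNReal.ofReal_ofNat 2, ← ENNReal.ofReal_mul (by norm_num),
        ← ENNReal.ofReal_mul (by positivity)]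
      congr 1
      rw [pieceConst]
      ring
  have hFcont : ∀ j, Continuous (𝓕 (G j)) := fun j =>
    VectorFourier.fourierIntegral_continuous Real.continuous_fourierChar continuous_inner (hGi j)
  have hlim : ∀ x, Filter.Tendsto (fun n => (∑ j ∈ Finset.range n, 𝓕 (G j)) x) Filter.atTop
      (nhds (𝓕 (Φ : Plane → ℂ) x)) := by
    intro x
    have hsum : ∀ n, (∑ j ∈ Finset.range n, 𝓕 (G j)) x =
        ∫ w, Real.fourierChar (-inner ℝ w x) • ∑ j ∈ Finset.range n, G j w := by
      intro n
      rw [Finset.sum_apply]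
      simp_rw [Real.fourier_eq, Finset.smul_sum]
      rw [integral_finsetSum]
      intro j _
      exact (Real.fourierIntegral_convergent_iff x).2 (hGi j)
    simp_rw [hsum]
    rw [Real.fourier_eq]
    refine tendsto_integral_of_dominated_convergence (fun w => ‖Φ w‖) ?_ Φ.integrable.norm ?_ ?_
    · intro n
      have : Integrable (∑ j ∈ Finset.range n, G j) := integrable_finsetSum' _ fun j _ => hGi j
      have := ((Real.fourierIntegral_convergent_iff x).2 this).1
      simpa only [Finset.sum_apply] using this
    · intro n
      refine Filter.Eventually.of_forall fun w => ?_
      have h1 : ∑ j ∈ Finset.range n, chiJ χ₀ χ j (modul a w) ≤ 1 :=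
        sum_le_hasSum _ (fun j _ => (chiJ_mem hχ j _).1) (hasSum_chiJ hχ _)
      have h0 : 0 ≤ ∑ j ∈ Finset.range n, chiJ χ₀ χ j (modul a w) :=
        Finset.sum_nonneg fun j _ => (chiJ_mem hχ j _).1
      rw [Circle.norm_smul]
      simp only [hG]
      rw [← Finset.sum_mul, ← Complex.ofReal_sum, norm_mul, Complex.norm_real,
        Real.norm_of_nonneg h0]
      exact mul_le_of_le_one_left (by positivity) h1
    · refine Filter.Eventually.of_forall fun w => ?_
      have h := (Complex.hasSum_ofReal.2 (hasSum_chiJ hχ (modul a w))).mul_right (Φ w)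
      have h' := h.tendsto_sum_nat
      simp only [Complex.ofReal_one, one_mul] at h'
      exact h'.const_smul _
  refine (Lp.eLpNorm_lim_le_liminf_eLpNorm (f := fun n => ∑ j ∈ Finset.range n, 𝓕 (G j)) ?_ _
    (Filter.Eventually.of_forall hlim)).trans ?_
  · intro n
    exact Finset.aestronglyMeasurable_sum _ fun j _ => (hFcont j).aestronglyMeasurable
  · have hK : 0 ≤ pieceConst a := by unfold pieceConst; positivity
    have hnn : ∀ j : ℕ, 0 ≤ (2 : ℝ) ^ ((j : ℝ) * b) * energy a χ₀ χ Φ j ^ (1 / 2 : ℝ) := fun j =>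
      mul_nonneg (by positivity) (Real.rpow_nonneg (energy_nonneg hχ _ _) _)
    refine Filter.liminf_le_of_le (by isBoundedDefault) fun c hc => ?_
    obtain ⟨n, hn⟩ := hc.exists
    refine hn.trans ((eLpNorm_sum_le (fun j _ => (hFcont j).aestronglyMeasurable)
      (by norm_num)).trans ?_)
    refine (Finset.sum_le_sum fun j _ => hpiece j).trans ?_
    rw [← ENNReal.ofReal_sum_of_nonneg fun j _ => mul_nonneg hK (hnn j), ← Finset.mul_sum]
    apply ENNReal.ofReal_le_ofReal
    gcongr
    exact (summable_energy ha hb1 hχ Φ).sum_le_tsum _ fun j _ => hnn j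

/-! ### Return to the given normalization -/

/-- A Schwartz function on `ℝ × ℝ`, regarded as one on the Euclidean plane. -/
def toPlane (f : 𝓢(ℝ × ℝ, ℂ)) : 𝓢(Plane, ℂ) :=
  SchwartzMap.compCLMOfContinuousLinearEquiv ℂ (WithLp.prodContinuousLinearEquiv 2 ℝ ℝ ℝ) f

theorem toPlane_coe (f : 𝓢(ℝ × ℝ, ℂ)) : ⇑(toPlane f) = ⇑f ∘ WithLp.ofLp := rfl

/-- The transform with kernel `e^{i(xξ+tλ)}` is, up to the dilation by `2π`, Mathlib's inverse
Fourier transform. -/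
theorem FT2_eq (f : 𝓢(ℝ × ℝ, ℂ)) (w : Plane) :
    FT2 (fun p => f p) (2 * Real.pi * w.fst) (2 * Real.pi * w.snd) =
      (𝓕⁻ (toPlane f) : 𝓢(Plane, ℂ)) w := by
  rw [SchwartzMap.fourierInv_coe, Real.fourierInv_eq', FT2,
    ← (WithLp.volume_preserving_symm_measurableEquiv_toLp_prod ℝ ℝ).integral_comp']
  refine integral_congr_ae (Filter.Eventually.of_forall fun v => ?_)
  simp only [WithLp.prod_inner_apply, smul_eq_mul, toPlane_coe]
  change cexp (I * (((v.ofLp.1 * _ + v.ofLp.2 * _ : ℝ)) : ℂ)) * f v.ofLp = _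
  congr 1
  rw [mul_comm I]
  congr 3
  simp only [RCLike.inner_apply, conj_trivial, WithLp.ofLp_fst, WithLp.ofLp_snd]
  ring

theorem energy_eq (a : ℝ) (χ₀ χ : ℝ → ℝ) (f : 𝓢(ℝ × ℝ, ℂ)) (j : ℕ) :
    energy a χ₀ χ (𝓕⁻ (toPlane f) : 𝓢(Plane, ℂ)) j = ((2 * Real.pi)⁻¹) ^ 2 *
      ∫ p : ℝ × ℝ, chiJ χ₀ χ j (p.2 - disp a p.1) * (1 + |p.1|) ^ (2 * (0 : ℝ)) *
        ‖FT2 (fun p => f p) p.1 p.2‖ ^ 2 := by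
  have hpi := Real.pi_pos
  set F : ℝ × ℝ → ℝ := fun p => chiJ χ₀ χ j (p.2 - disp a p.1) * (1 + |p.1|) ^ (2 * (0 : ℝ)) *
        ‖FT2 (fun p => f p) p.1 p.2‖ ^ 2 with hF
  have h := Measure.integral_comp_smul volume F (2 * Real.pi)
  rw [Module.finrank_prod, Module.finrank_self, abs_of_nonneg (by positivity), smul_eq_mul,
    ← inv_pow] at h
  norm_num only at h
  rw [← h, ← (WithLp.volume_preserving_symm_measurableEquiv_toLp_prod ℝ ℝ).integral_comp', energy]
  refine integral_congr_ae (Filter.Eventually.of_forall fun w => ?_)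
  simp only [hF, ← FT2_eq]
  simp [modul]

theorem statement2 (a : ℝ) (ha : a ∈ Set.Icc (0 : ℝ) 1)
    (χ₀ χ : ℝ → ℝ) (hχ : DyadicCutoffs χ₀ χ) :
    ∃ C > 0, ∀ f : SchwartzMap (ℝ × ℝ) ℂ,
      Lpnorm 4 (fun p : ℝ × ℝ => f p) ≤
        C * Xnorm a χ₀ χ ((3 + a) / (4 * (2 + a))) 0 (fun p => f p) := by
  have hpi := Real.pi_pos
  have hK : 0 < pieceConst a := by unfold pieceConst; positivity
  refine ⟨pieceConst a * (2 * Real.pi)⁻¹, by positivity, fun f => ?_⟩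
  have hX : ∑' j : ℕ, (2 : ℝ) ^ ((j : ℝ) * ((3 + a) / (4 * (2 + a)))) *
        energy a χ₀ χ (𝓕⁻ (toPlane f) : 𝓢(Plane, ℂ)) j ^ (1 / 2 : ℝ) =
      (2 * Real.pi)⁻¹ * Xnorm a χ₀ χ ((3 + a) / (4 * (2 + a))) 0 (fun p => f p) := by
    rw [Xnorm, ← tsum_mul_left]
    refine tsum_congr fun j => ?_
    rw [energy_eq, Real.mul_rpow (by positivity), ← Real.sqrt_eq_rpow ((2 * Real.pi)⁻¹ ^ 2),
      Real.sqrt_sq (by positivity)]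
    · ring
    · refine integral_nonneg fun p => ?_
      have := (chiJ_mem hχ j (p.2 - disp a p.1)).1
      positivity
  have h := eLpNorm_fourier_schwartz_le ha hχ (𝓕⁻ (toPlane f))
  rw [← SchwartzMap.fourier_coe, FourierTransform.fourier_fourierInv_eq, toPlane_coe,
    eLpNorm_comp_measurePreserving f.continuous.aestronglyMeasurable
      (WithLp.volume_preserving_ofLp ℝ ℝ), hX, ← mul_assoc,
    (f.memLp 4 volume).eLpNorm_eq_integral_rpow_norm (by norm_num) (by norm_num)] at h
  have hX0 : 0 ≤ Xnorm a χ₀ χ ((3 + a) / (4 * (2 + a))) 0 (fun p => f p) := by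
    refine tsum_nonneg fun j => mul_nonneg (by positivity) (Real.rpow_nonneg ?_ _)
    refine integral_nonneg fun p => ?_
    have := (chiJ_mem hχ j (p.2 - disp a p.1)).1
    positivity
  have h' := (ENNReal.ofReal_le_ofReal_iff (by positivity)).1 h
  simpa [Lpnorm] using h'
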